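/- Let p be a prime with p ≡ 1, 65, or 81 (mod 112). Then p is representable by x²+56y² if and only if p is representable by x²+448y². Let p be a prime with p ≡ 9, 25, or 57 (mod 112). Then p is representable by exactly one of the quadratic forms x²+56y² and x²+448y². -/

import Mathlib

lemma form_reduce (N P : ℤ) (hN : 0 < N) : ∀ (n : ℕ) (a b c X Y : ℤ), 0 < a → a ≤ n →
    a * c - b ^ 2 = N → a * X ^ 2 + 2 * b * X * Y + c * Y ^ 2 = P →
    ∃ a b c X Y : ℤ, 0 < a ∧ -a ≤ 2 * b ∧ 2 * b ≤ a ∧ a ≤ c ∧ a * c - b ^ 2 = N ∧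
      a * X ^ 2 + 2 * b * X * Y + c * Y ^ 2 = P := by
  intro n
  induction n with
  | zero => intro a b c X Y h1 h2; exfalso; push_cast at h2; omega
  | succ n ih =>
    intro a b c X Y ha hn hd hP
    obtain ⟨k, hk1, hk2⟩ : ∃ k : ℤ, -a ≤ 2 * (b - k * a) ∧ 2 * (b - k * a) ≤ a := by
      refine ⟨(2 * b + a) / (2 * a), ?_, ?_⟩
      · have := Int.mul_ediv_add_emod (2 * b + a) (2 * a)
        have h2 := Int.emod_nonneg (2 * b + a) (show 2 * a ≠ 0 by omega)
        nlinarith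
      · have := Int.mul_ediv_add_emod (2 * b + a) (2 * a)
        have h2 := Int.emod_lt_of_pos (2 * b + a) (show 0 < 2 * a by omega)
        nlinarith
    obtain ⟨b', hb'⟩ : ∃ b', b' = b - k * a := ⟨_, rfl⟩
    rw [← hb'] at hk1 hk2
    obtain ⟨c', hc'⟩ : ∃ c', c' = c - a * k ^ 2 - 2 * b' * k := ⟨_, rfl⟩
    have hb : b = b' + k * a := by omega
    have hc : c = c' + a * k ^ 2 + 2 * b' * k := by omega
    have hd' : a * c' - b' ^ 2 = N := by rw [← hd, hc, hb]; ring
    have hP' : a * (X + k * Y) ^ 2 + 2 * b' * (X + k * Y) * Y + c' * Y ^ 2 = P := by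
      rw [← hP, hc, hb]; ring
    have hcpos : 0 < c' := by
      by_contra h
      nlinarith [sq_nonneg b']
    by_cases hac : a ≤ c'
    · exact ⟨a, b', c', _, _, ha, hk1, hk2, hac, hd', hP'⟩
    · refine ih c' b' a Y (X + k * Y) hcpos (by push_cast at hn; omega) ?_ ?_
      · rw [← hd']; ring
      · rw [← hP']; ring

lemma form_exists (p : ℕ) (N : ℤ) (hN : 0 < N) (hp : p.Prime) (h : IsSquare ((-N : ℤ) : ZMod p)) :
    ∃ a b c X Y : ℤ, 0 < a ∧ -a ≤ 2 * b ∧ 2 * b ≤ a ∧ a ≤ c ∧ a * c - b ^ 2 = N ∧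
      a * X ^ 2 + 2 * b * X * Y + c * Y ^ 2 = p := by
  obtain ⟨r, hr⟩ := h
  obtain ⟨b, rfl⟩ := ZMod.intCast_surjective r
  have : ((b ^ 2 + N : ℤ) : ZMod p) = 0 := by
    push_cast at hr ⊢
    linear_combination -hr
  have _inst : NeZero p := ⟨hp.ne_zero⟩
  rw [ZMod.intCast_zmod_eq_zero_iff_dvd] at this
  obtain ⟨c, hc⟩ := this
  exact form_reduce N p hN p p b c 1 0 (by exact_mod_cast hp.pos) le_rfl (by linarith) (by ring)

lemma sq_mod7 (p : ℕ) (hp : p.Prime) (h8 : p % 8 = 1) (h7 : p % 7 = 1 ∨ p % 7 = 2 ∨ p % 7 = 4) :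
    IsSquare ((-7 : ℤ) : ZMod p) ∧ IsSquare ((-14 : ℤ) : ZMod p) := by
  have := Fact.mk hp
  have : Fact (Nat.Prime 7) := ⟨by norm_num⟩
  have hp2 : p ≠ 2 := by omega
  have h2 : IsSquare (2 : ZMod p) := (ZMod.exists_sq_eq_two_iff hp2).2 (Or.inl h8)
  have h1 : IsSquare (-1 : ZMod p) := ZMod.exists_sq_eq_neg_one_iff.2 (by omega)
  have hh7 : IsSquare ((7 : ℕ) : ZMod p) := by
    rw [ZMod.exists_sq_eq_prime_iff_of_mod_four_eq_one (by omega) (by norm_num)]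
    have : ((p : ℕ) : ZMod 7) = ((p % 7 : ℕ) : ZMod 7) := by simp
    rw [this]
    rcases h7 with h | h | h <;> rw [h]
    · exact ⟨1, rfl⟩
    · exact ⟨3, rfl⟩
    · exact ⟨2, rfl⟩
  have h17 := h1.mul hh7
  refine ⟨?_, ?_⟩
  · have e : ((-7 : ℤ) : ZMod p) = -1 * ((7 : ℕ) : ZMod p) := by push_cast; ring
    rw [e]; exact h17
  · have e : ((-14 : ℤ) : ZMod p) = -1 * ((7 : ℕ) : ZMod p) * 2 := by push_cast; ring
    rw [e]; exact h17.mul h2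

lemma odd_mod8 (y : ℤ) (h : y % 2 = 1) : y ^ 2 % 8 = 1 := by
  have : y % 8 = 1 ∨ y % 8 = 3 ∨ y % 8 = 5 ∨ y % 8 = 7 := by omega
  rcases this with h | h | h | h <;> simp [pow_two, Int.mul_emod, h]

lemma even_mod8 (y : ℤ) (h : y % 2 = 0) : y ^ 2 % 8 = 0 ∨ y ^ 2 % 8 = 4 := by
  have : y % 8 = 0 ∨ y % 8 = 2 ∨ y % 8 = 4 ∨ y % 8 = 6 := by omega
  rcases this with h | h | h | h <;> simp [pow_two, Int.mul_emod, h]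

lemma rep7 (p : ℕ) (hp : p.Prime) (h8 : p % 8 = 1) (h7 : p % 7 = 1 ∨ p % 7 = 2 ∨ p % 7 = 4) :
    ∃ a c : ℤ, (p : ℤ) = a ^ 2 + 112 * c ^ 2 := by
  obtain ⟨a, b, c, X, Y, ha, hb1, hb2, hac, hd, hP⟩ :=
    form_exists p 7 (by norm_num) hp (sq_mod7 p hp h8 h7).1
  have ha4 : a < 4 := by nlinarith
  have key : (p : ℤ) = X ^ 2 + 7 * Y ^ 2 := by
    have hb3 : -1 ≤ b := by omega
    have hb4 : b ≤ 1 := by omega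
    interval_cases a <;> interval_cases b <;> first | omega | skip
    · have : c = 7 := by omega
      subst this; linarith
    · have : c = 4 := by omega
      subst this
      exfalso
      have : (p : ℤ) = 2 * (X ^ 2 + -1 * X * Y + 2 * Y ^ 2) := by rw [← hP]; ring
      omega
    · have : c = 4 := by omega
      subst this
      exfalso
      have : (p : ℤ) = 2 * (X ^ 2 + X * Y + 2 * Y ^ 2) := by rw [← hP]; ring
      omega
  have hYe : Y % 4 = 0 := by
    rcases Int.emod_two_eq_zero_or_one Y with h | h
    · rcases Int.emod_two_eq_zero_or_one X with h' | h'
      · have := even_mod8 X h'; have := even_mod8 Y h; omega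
      · have h1 := odd_mod8 X h'
        have : Y % 8 = 0 ∨ Y % 8 = 2 ∨ Y % 8 = 4 ∨ Y % 8 = 6 := by omega
        have h2 : Y ^ 2 % 8 = 0 := by omega
        rcases this with h | h | h | h <;> simp [pow_two, Int.mul_emod, h] at h2 <;> omega
    · have h1 := odd_mod8 Y h
      rcases Int.emod_two_eq_zero_or_one X with h' | h'
      · have := even_mod8 X h'; omega
      · have := odd_mod8 X h'; omega
  refine ⟨X, Y / 4, ?_⟩
  have : Y = 4 * (Y / 4) := by omega
  rw [key]
  generalize Y / 4 = c at this
  subst this; ring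

lemma nonres7 (p : ℕ) (h7 : p % 7 = 1 ∨ p % 7 = 2 ∨ p % 7 = 4) (A B : ℤ)
    (h : 3 * (p : ℤ) = A ^ 2 + 14 * B) : False := by
  have : A % 7 = 0 ∨ A % 7 = 1 ∨ A % 7 = 2 ∨ A % 7 = 3 ∨ A % 7 = 4 ∨ A % 7 = 5 ∨ A % 7 = 6 := by
    omega
  have h2 : A ^ 2 % 7 = 0 ∨ A ^ 2 % 7 = 1 ∨ A ^ 2 % 7 = 2 ∨ A ^ 2 % 7 = 4 := by
    rcases this with h | h | h | h | h | h | h <;> simp [pow_two, Int.mul_emod, h]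
  omega

lemma rep14 (p : ℕ) (hp : p.Prime) (h8 : p % 8 = 1) (h7 : p % 7 = 1 ∨ p % 7 = 2 ∨ p % 7 = 4) :
    (∃ x z : ℤ, (p : ℤ) = x ^ 2 + 56 * z ^ 2) ∨ (∃ x y : ℤ, (p : ℤ) = 2 * x ^ 2 + 7 * y ^ 2) := by
  obtain ⟨a, b, c, X, Y, ha, hb1, hb2, hac, hd, hP⟩ :=
    form_exists p 14 (by norm_num) hp (sq_mod7 p hp h8 h7).2
  have ha4 : a < 5 := by nlinarith
  have key : (p : ℤ) = X ^ 2 + 14 * Y ^ 2 ∨ (p : ℤ) = 2 * X ^ 2 + 7 * Y ^ 2 := by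
    have hb3 : -2 ≤ b := by omega
    have hb4 : b ≤ 2 := by omega
    interval_cases a <;> interval_cases b <;> first | omega | skip
    · have : c = 14 := by omega
      subst this; left; linarith
    · have : c = 7 := by omega
      subst this; right; linarith
    · have : c = 5 := by omega
      subst this
      exact (nonres7 p h7 (3 * X - Y) (Y ^ 2) (by rw [← hP]; ring)).elim
    · have : c = 5 := by omega
      subst this
      exact (nonres7 p h7 (3 * X + Y) (Y ^ 2) (by rw [← hP]; ring)).elim
  rcases key with key | key
  · left
    have hYe : Y % 2 = 0 := by
      by_contra h
      have h1 := odd_mod8 Y (by omega)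
      rcases Int.emod_two_eq_zero_or_one X with h' | h'
      · have := even_mod8 X h'; omega
      · have := odd_mod8 X h'; omega
    refine ⟨X, Y / 2, ?_⟩
    have : Y = 2 * (Y / 2) := by omega
    rw [key]
    generalize Y / 2 = c at this
    subst this; ring
  · exact Or.inr ⟨_, _, key⟩

/-- An odd prime that is not ±1 mod 8 and divides s²-2t² divides both s and t. -/
lemma dvd_both (q : ℕ) (hq : q.Prime) (hq2 : q ≠ 2) (h8 : ¬ (q % 8 = 1 ∨ q % 8 = 7)) (s t : ℤ)
    (h : (q : ℤ) ∣ s ^ 2 - 2 * t ^ 2) : (q : ℤ) ∣ s ∧ (q : ℤ) ∣ t := by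
  have := Fact.mk hq
  have hqp : Prime (q : ℤ) := Nat.prime_iff_prime_int.1 hq
  have ht : (q : ℤ) ∣ t := by
    by_contra ht
    apply h8
    rw [← ZMod.exists_sq_eq_two_iff hq2]
    have h0 : (t : ZMod q) ≠ 0 := by
      intro h0
      exact ht ((ZMod.intCast_zmod_eq_zero_iff_dvd t q).1 h0)
    have h1 : ((s ^ 2 - 2 * t ^ 2 : ℤ) : ZMod q) = 0 :=
      (ZMod.intCast_zmod_eq_zero_iff_dvd _ q).2 h
    push_cast at h1
    refine ⟨s / t, ?_⟩
    field_simp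
    linear_combination -h1
  refine ⟨?_, ht⟩
  have : (q : ℤ) ∣ s ^ 2 := by
    have h3 : (q : ℤ) ∣ 2 * t ^ 2 := Dvd.dvd.mul_left (dvd_pow ht (by norm_num)) 2
    simpa using dvd_add h h3
  exact hqp.dvd_of_dvd_pow this

lemma pm_one (k : ℤ) (hk : k ∣ 14) : ∀ (n : ℕ) (u v s t : ℤ), u.natAbs ≤ n → u % 2 = 1 →
    u * v = k * (s ^ 2 - 2 * t ^ 2) →
    (∀ q : ℕ, q.Prime → (q : ℤ) ∣ u → (q : ℤ) ∣ v → q % 8 = 1 ∨ q % 8 = 7) →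
    u % 8 = 1 ∨ u % 8 = 7 := by
  intro n
  induction n with
  | zero => intro u v s t h1 h2; omega
  | succ n ih =>
    intro u v s t hn hu h hc
    by_cases h1 : u.natAbs = 1
    · omega
    obtain ⟨q, hq, hqu'⟩ := Nat.exists_prime_and_dvd h1
    have hqu : (q : ℤ) ∣ u := Int.natCast_dvd.2 hqu'
    have hqp : Prime (q : ℤ) := Nat.prime_iff_prime_int.1 hq
    have hq2 : q ≠ 2 := by rintro rfl; omega
    have hqg := hq.two_le
    by_cases h8 : q % 8 = 1 ∨ q % 8 = 7
    · obtain ⟨w, rfl⟩ := hqu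
      have hw : w % 2 = 1 := by
        rcases Int.emod_two_eq_zero_or_one w with h | h
        · simp [Int.mul_emod, h] at hu
        · exact h
      have hlt : w.natAbs ≤ n := by
        rw [Int.natAbs_mul, Int.natAbs_natCast] at hn
        have : 0 < w.natAbs := by omega
        nlinarith
      have := ih w (q * v) s t hlt hw (by rw [← h]; ring) (by
        intro r hr hrw hrv
        rcases (Nat.prime_iff_prime_int.1 hr).dvd_or_dvd hrv with h5 | h5
        · have := (Nat.prime_dvd_prime_iff_eq hr hq).1 (by exact_mod_cast h5)
          rw [this]; exact h8
        · exact hc r hr (Dvd.dvd.mul_left hrw _) h5)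
      have h8' : (q : ℤ) % 8 = 1 ∨ (q : ℤ) % 8 = 7 := by omega
      rcases this with h3 | h3 <;> rcases h8' with h4 | h4 <;> simp [Int.mul_emod, h3, h4]
    · have hqv : ¬ (q : ℤ) ∣ v := fun hv => h8 (hc q hq hqu hv)
      have hqk : ¬ (q : ℤ) ∣ k := by
        intro hqk
        have h14 : q ∣ 2 * 7 := by exact_mod_cast hqk.trans hk
        rcases (Nat.Prime.dvd_mul hq).1 h14 with h5 | h5
        · exact hq2 ((Nat.prime_dvd_prime_iff_eq hq (by norm_num)).1 h5)
        · have := ((Nat.prime_dvd_prime_iff_eq hq (by norm_num)).1 h5)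
          omega
      have hst : (q : ℤ) ∣ s ^ 2 - 2 * t ^ 2 := by
        have : (q : ℤ) ∣ k * (s ^ 2 - 2 * t ^ 2) := h ▸ Dvd.dvd.mul_right hqu v
        exact (hqp.dvd_or_dvd this).resolve_left hqk
      obtain ⟨⟨s', rfl⟩, ⟨t', rfl⟩⟩ := dvd_both q hq hq2 h8 s t hst
      have hq0 : (q : ℤ) ≠ 0 := hqp.ne_zero
      obtain ⟨w, rfl⟩ := hqu
      have e1 : w * v = q * (k * (s' ^ 2 - 2 * t' ^ 2)) := by
        apply mul_left_cancel₀ hq0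
        linear_combination h
      have hqw : (q : ℤ) ∣ w := (hqp.dvd_or_dvd (Dvd.intro _ e1.symm)).resolve_right hqv
      obtain ⟨w, rfl⟩ := hqw
      have e2 : w * v = k * (s' ^ 2 - 2 * t' ^ 2) := by
        apply mul_left_cancel₀ hq0
        linear_combination e1
      have hw : w % 2 = 1 := by
        rcases Int.emod_two_eq_zero_or_one w with h | h
        · simp [Int.mul_emod, h] at hu
        · exact h
      have hlt : w.natAbs ≤ n := by
        rw [Int.natAbs_mul, Int.natAbs_mul, Int.natAbs_natCast] at hn
        have : 0 < w.natAbs := by omega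
        nlinarith [Nat.mul_le_mul hqg (Nat.mul_le_mul hqg (le_refl w.natAbs))]
      have := ih w v s' t' hlt hw e2 (fun r hr hrw hrv =>
        hc r hr (Dvd.dvd.mul_left (Dvd.dvd.mul_left hrw _) _) hrv)
      have hodd : (q : ℤ) % 2 = 1 := by
        rcases hq.eq_two_or_odd with h | h <;> omega
      have h9 := odd_mod8 q hodd
      have h10 : (q : ℤ) * (q * w) = q ^ 2 * w := by ring
      rw [h10]
      rcases this with h3 | h3 <;> simp [Int.mul_emod, h3, h9]

lemma not_sq_dvd (p q : ℕ) (hp : p.Prime) (hq : q.Prime) (h : (q : ℤ) ^ 2 ∣ (p : ℤ)) : False := by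
  have h1 : q ^ 2 ∣ p := by exact_mod_cast h
  have h2 : q = p := (Nat.prime_dvd_prime_iff_eq hq hp).1 ((dvd_pow_self q (by norm_num)).trans h1)
  subst h2
  have := Nat.le_of_dvd hq.pos h1
  have := hq.two_le
  nlinarith

lemma sq16 (a : ℤ) : ((a % 8 = 1 ∨ a % 8 = 7) → a ^ 2 % 16 = 1) ∧
    ((a % 8 = 3 ∨ a % 8 = 5) → a ^ 2 % 16 = 9) := by
  obtain ⟨r, m, hr, rfl⟩ : ∃ r m : ℤ, a % 8 = r ∧ a = 8 * m + r := ⟨a % 8, a / 8, rfl, by omega⟩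
  rw [hr]
  have e : (8 * m + r) ^ 2 = 16 * (4 * m ^ 2 + m * r) + r ^ 2 := by ring
  rw [e]
  refine ⟨?_, ?_⟩ <;> rintro (rfl | rfl) <;> omega

lemma case1_aux (p : ℕ) (hp : p.Prime) (u v z c : ℤ) (hu : u % 2 = 0) (hv : v % 2 = 1)
    (huv : u * v = 14 * (z ^ 2 - 2 * c ^ 2)) (hP : (p : ℤ) = (u + v) ^ 2 + 112 * c ^ 2) :
    (c % 2 = 0 → (p : ℤ) % 16 = 1) ∧ (c % 2 = 1 → (p : ℤ) % 16 = 9) := by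
  have hcop : ∀ q : ℕ, q.Prime → (q : ℤ) ∣ v → (q : ℤ) ∣ u → q % 8 = 1 ∨ q % 8 = 7 := by
    intro q hq h1 h2
    by_contra h8
    have hqp : Prime (q : ℤ) := Nat.prime_iff_prime_int.1 hq
    have hq2 : q ≠ 2 := by rintro rfl; omega
    have h14 : ¬ (q : ℤ) ∣ 14 := by
      intro h
      have h14 : q ∣ 2 * 7 := by exact_mod_cast h
      rcases (Nat.Prime.dvd_mul hq).1 h14 with h5 | h5
      · exact hq2 ((Nat.prime_dvd_prime_iff_eq hq (by norm_num)).1 h5)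
      · have := ((Nat.prime_dvd_prime_iff_eq hq (by norm_num)).1 h5)
        omega
    have h3 : (q : ℤ) ∣ 14 * (z ^ 2 - 2 * c ^ 2) := huv ▸ Dvd.dvd.mul_right h2 v
    have h4 := (dvd_both q hq hq2 h8 z c ((hqp.dvd_or_dvd h3).resolve_left h14)).2
    apply not_sq_dvd p q hp hq
    rw [hP]
    exact dvd_add (pow_dvd_pow_of_dvd (dvd_add h2 h1) 2) (Dvd.dvd.mul_left (pow_dvd_pow_of_dvd h4 2) _)
  have hv8 := pm_one 14 (by norm_num) v.natAbs v u z c le_rfl hv (by rw [← huv]; ring) hcop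
  have h16 := sq16 (u + v)
  suffices (c % 2 = 0 → (u + v) % 8 = 1 ∨ (u + v) % 8 = 7) ∧
      (c % 2 = 1 → (u + v) % 8 = 3 ∨ (u + v) % 8 = 5) by
    refine ⟨fun h => ?_, fun h => ?_⟩
    · have := h16.1 (this.1 h); omega
    · have := h16.2 (this.2 h); omega
  obtain ⟨w, rfl⟩ : ∃ w, u = 2 * w := ⟨u / 2, by omega⟩
  have hw : w * v = 7 * (z ^ 2 - 2 * c ^ 2) := by linarith
  have hwv : w * v % 8 = w % 8 ∨ w * v % 8 = (- w) % 8 := by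
    obtain ⟨m, hm⟩ : ∃ m, v = 8 * m + 1 ∨ v = 8 * m - 1 := by
      rcases hv8 with h | h
      · exact ⟨v / 8, by omega⟩
      · exact ⟨v / 8 + 1, by omega⟩
    rcases hm with rfl | rfl
    · left
      have : w * (8 * m + 1) = 8 * (w * m) + w := by ring
      omega
    · right
      have : w * (8 * m - 1) = 8 * (w * m) - w := by ring
      omega
  rcases Int.emod_two_eq_zero_or_one z with hz | hz
  · have h1 := even_mod8 z hz
    refine ⟨fun hcc => ?_, fun hcc => ?_⟩
    · have h2 := even_mod8 c hcc
      omega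
    · have h2 := odd_mod8 c hcc
      omega
  · have h1 := odd_mod8 z hz
    have hw2 : w % 2 = 1 := by omega
    have hw8 := pm_one 7 (by norm_num) w.natAbs w v z c le_rfl hw2 hw
      (fun q hq h1 h2 => hcop q hq h2 (Dvd.dvd.mul_left h1 2))
    have hprod : (w * v) % 8 = ((w % 8) * (v % 8)) % 8 := Int.mul_emod _ _ _
    refine ⟨fun hcc => ?_, fun hcc => ?_⟩
    · have h2 := even_mod8 c hcc
      rcases hw8 with h5 | h5 <;> rcases hv8 with h6 | h6 <;> rw [h5, h6] at hprod <;> omega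
    · have h2 := odd_mod8 c hcc
      rcases hw8 with h5 | h5 <;> rcases hv8 with h6 | h6 <;> rw [h5, h6] at hprod <;> omega

lemma case1 (p : ℕ) (hp : p.Prime) (hp2 : p % 2 = 1) (x z a c : ℤ)
    (h1 : (p : ℤ) = x ^ 2 + 56 * z ^ 2) (h2 : (p : ℤ) = a ^ 2 + 112 * c ^ 2) :
    (c % 2 = 0 → (p : ℤ) % 16 = 1) ∧ (c % 2 = 1 → (p : ℤ) % 16 = 9) := by
  have hx : x % 2 = 1 := by
    by_contra h
    have := even_mod8 x (by omega); omega
  have ha : a % 2 = 1 := by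
    by_contra h
    have := even_mod8 a (by omega); omega
  obtain ⟨u, hu⟩ : ∃ u, a - x = 2 * u := ⟨(a - x) / 2, by omega⟩
  obtain ⟨v, hv⟩ : ∃ v, v = u + x := ⟨_, rfl⟩
  have hxe : x = v - u := by omega
  have hae : a = u + v := by omega
  subst hxe hae
  have huv : u * v = 14 * (z ^ 2 - 2 * c ^ 2) := by linarith
  rcases Int.emod_two_eq_zero_or_one u with h | h
  · exact case1_aux p hp u v z c h (by omega) huv h2
  · exact case1_aux p hp v u z c (by omega) h (by rw [← huv]; ring) (by rw [h2]; ring)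

lemma case2 (p : ℕ) (hp : p.Prime) (h8 : p % 8 = 1) (x y a c : ℤ)
    (h1 : (p : ℤ) = 2 * x ^ 2 + 7 * y ^ 2) (h2 : (p : ℤ) = a ^ 2 + 112 * c ^ 2) :
    (c % 2 = 0 → (p : ℤ) % 16 = 9) ∧ (c % 2 = 1 → (p : ℤ) % 16 = 1) := by
  have hy : y % 2 = 1 := by
    by_contra h
    have := even_mod8 y (by omega); omega
  have hy8 := odd_mod8 y hy
  have hx : x % 2 = 1 := by
    by_contra h
    have := even_mod8 x (by omega); omega
  have hx8 := odd_mod8 x hx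
  have hcop : ∀ q : ℕ, q.Prime → (q : ℤ) ∣ y - 4 * c → (q : ℤ) ∣ 7 * (y + 4 * c) →
      q % 8 = 1 ∨ q % 8 = 7 := by
    intro q hq h3 h4
    by_contra hq8
    have hqp : Prime (q : ℤ) := Nat.prime_iff_prime_int.1 hq
    have hq2 : q ≠ 2 := by rintro rfl; omega
    have hn2 : ¬ (q : ℤ) ∣ 2 := by
      intro h
      have : q ∣ 2 := by exact_mod_cast h
      exact hq2 ((Nat.prime_dvd_prime_iff_eq hq (by norm_num)).1 this)
    have hn7 : ¬ (q : ℤ) ∣ 7 := by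
      intro h
      have : q ∣ 7 := by exact_mod_cast h
      have := ((Nat.prime_dvd_prime_iff_eq hq (by norm_num)).1 this)
      omega
    have h5 := (hqp.dvd_or_dvd h4).resolve_left hn7
    have h6 : (q : ℤ) ∣ 2 * y := by
      have := dvd_add h3 h5
      ring_nf at this ⊢
      exact this
    have hqy := (hqp.dvd_or_dvd h6).resolve_left hn2
    have h7 : (q : ℤ) ∣ a ^ 2 - 2 * x ^ 2 := by
      have : a ^ 2 - 2 * x ^ 2 = (y - 4 * c) * (7 * (y + 4 * c)) := by linarith
      rw [this]; exact Dvd.dvd.mul_right h3 _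
    have hqx := (dvd_both q hq hq2 hq8 a x h7).2
    apply not_sq_dvd p q hp hq
    rw [h1]
    exact dvd_add (Dvd.dvd.mul_left (pow_dvd_pow_of_dvd hqx 2) _)
      (Dvd.dvd.mul_left (pow_dvd_pow_of_dvd hqy 2) _)
  have hu8 := pm_one 1 (by norm_num) (y - 4 * c).natAbs (y - 4 * c) (7 * (y + 4 * c)) a x le_rfl
    (by omega) (by linarith) hcop
  have h16 := sq16 y
  refine ⟨fun h => ?_, fun h => ?_⟩
  · have := h16.1 (by omega)
    omega
  · have := h16.2 (by omega)
    omega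

lemma unique_rep (p : ℕ) (hp : p.Prime) (h8 : p % 8 = 1)
    (h7 : p % 7 = 1 ∨ p % 7 = 2 ∨ p % 7 = 4) :
    (p % 16 = 1 → ((∃ x y : ℤ, (p : ℤ) = x ^ 2 + 56 * y ^ 2) ↔
      (∃ x y : ℤ, (p : ℤ) = x ^ 2 + 448 * y ^ 2))) ∧
    (p % 16 = 9 → ((∃ x y : ℤ, (p : ℤ) = x ^ 2 + 56 * y ^ 2) ↔
      ¬ (∃ x y : ℤ, (p : ℤ) = x ^ 2 + 448 * y ^ 2))) := by
  have hhalf : ∀ a c : ℤ, c % 2 = 0 → (p : ℤ) = a ^ 2 + 112 * c ^ 2 →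
      ∃ x y : ℤ, (p : ℤ) = x ^ 2 + 448 * y ^ 2 := by
    intro a c hc h
    obtain ⟨d, rfl⟩ : ∃ d, c = 2 * d := ⟨c / 2, by omega⟩
    exact ⟨a, d, by rw [h]; ring⟩
  have hdbl : ∀ a d : ℤ, (p : ℤ) = a ^ 2 + 448 * d ^ 2 → (p : ℤ) = a ^ 2 + 112 * (2 * d) ^ 2 := by
    intro a d h; rw [h]; ring
  obtain ⟨a, c, hac⟩ := rep7 p hp h8 h7
  have hp2 : p % 2 = 1 := by omega
  refine ⟨fun h16 => ⟨?_, ?_⟩, fun h16 => ⟨?_, ?_⟩⟩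
  · rintro ⟨x, z, h⟩
    refine hhalf a c ?_ hac
    have := case1 p hp hp2 x z a c h hac
    omega
  · rintro ⟨b, d, h⟩
    rcases rep14 p hp h8 h7 with h' | ⟨x, y, h'⟩
    · exact h'
    · have := case2 p hp h8 x y b (2 * d) h' (hdbl _ _ h)
      omega
  · rintro ⟨x, z, h⟩ ⟨b, d, h'⟩
    have := case1 p hp hp2 x z b (2 * d) h (hdbl _ _ h')
    omega
  · intro hn
    rcases rep14 p hp h8 h7 with h' | ⟨x, y, h'⟩
    · exact h'
    · exfalso
      apply hn
      refine hhalf a c ?_ hac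
      have := case2 p hp h8 x y a c h' hac
      omega

theorem kaplansky_like_5 (p : ℕ) (hp : p.Prime) :
    ((p % 112 = 1 ∨ p % 112 = 65 ∨ p % 112 = 81) → ((∃ x y : ℤ, (p : ℤ) = x ^ 2 + 56 * y ^ 2) ↔
      (∃ x y : ℤ, (p : ℤ) = x ^ 2 + 448 * y ^ 2))) ∧
    ((p % 112 = 9 ∨ p % 112 = 25 ∨ p % 112 = 57) → Xor' (∃ x y : ℤ, (p : ℤ) = x ^ 2 + 56 * y ^ 2)
      (∃ x y : ℤ, (p : ℤ) = x ^ 2 + 448 * y ^ 2)) := by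

  refine ⟨fun h => ?_, fun h => ?_⟩
  · exact (unique_rep p hp (by omega) (by omega)).1 (by omega)
  · refine xor_iff_iff_not.2 ?_
    exact (unique_rep p hp (by omega) (by omega)).2 (by omega)
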